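/- Let G be a d-regular simple graph with finite vertex set V, |V| = n, equipped with a family of canonical paths (p_{s,t})_{(s,t) ∈ V × V}, and let 0 < c < 1/2. Then every separator (A, B, C) of G with separation constant c satisfies 2 · d · φ_max · |C| ≥ c · n². -/

import Mathlib

/-- The edge boundary `δ(S)` of a vertex set `S`: the set of edges of `G` with
exactly one endpoint in `S`. -/
noncomputable def edgeBoundary {V : Type*} [Fintype V] (G : SimpleGraph V)
    (S : Finset V) : Finset (Sym2 V) := by
  classical exact G.edgeFinset.filter (fun e => ∃ a ∈ S, ∃ b ∉ S, e = s(a, b))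

/-- Given a family of canonical paths `p`, `phi G p e` counts the ordered pairs
`(s, t)` whose canonical path uses the edge `e`. -/
noncomputable def phi {V : Type*} [Fintype V] (G : SimpleGraph V)
    (p : ∀ s t : V, G.Walk s t) (e : Sym2 V) : ℕ := by
  classical exact (Finset.univ.filter (fun st : V × V => e ∈ (p st.1 st.2).edges)).card

/-- `phiMax G p` is the maximum of `phi G p e` over all edges `e` of `G`. -/
noncomputable def phiMax {V : Type*} [Fintype V] (G : SimpleGraph V)
    (p : ∀ s t : V, G.Walk s t) : ℕ := by
  classical exact G.edgeFinset.sup (phi G p)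

/-!
Every canonical path between a vertex of `A` and a vertex outside `A`, in either direction, crosses
`δ(A)`, so `2 |A| (n - |A|) ≤ φ_max |δ(A)|`. Every edge of `δ(A)` has an endpoint in `C`, so
`|δ(A)| ≤ d |C|`. Finally `|A| ≥ c n`, and `|A| ≤ |B|` gives `2 (n - |A|) ≥ n`.
-/

section EdgeBoundary

variable {V : Type*} [Fintype V] {G : SimpleGraph V} {S C : Finset V}

theorem mem_edgeBoundary {e : Sym2 V} :
    e ∈ edgeBoundary G S ↔ e ∈ G.edgeSet ∧ ∃ a ∈ S, ∃ b ∉ S, e = s(a, b) := by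
  simp only [edgeBoundary, Finset.mem_filter, SimpleGraph.mem_edgeFinset]

theorem edgeBoundary_subset_edgeSet : (edgeBoundary G S : Set (Sym2 V)) ⊆ G.edgeSet :=
  fun _ he => (mem_edgeBoundary.1 he).1

theorem exists_mem_edgeBoundary_mem_edges {s t : V} (w : G.Walk s t) (hs : s ∈ S) (ht : t ∉ S) :
    ∃ e ∈ edgeBoundary G S, e ∈ w.edges := by
  obtain ⟨e, he, hfst, hsnd⟩ := w.exists_boundary_dart (S : Set V) hs ht
  exact ⟨e.edge, mem_edgeBoundary.2 ⟨e.edge_mem, e.fst, hfst, e.snd, hsnd, rfl⟩,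
    List.mem_map_of_mem he⟩

theorem card_edgeBoundary_le_sum_degree [G.LocallyFinite]
    (hC : ∀ a ∈ S, ∀ b ∉ S, G.Adj a b → b ∈ C) :
    (edgeBoundary G S).card ≤ ∑ v ∈ C, G.degree v := by
  classical
  have hsub : edgeBoundary G S ⊆ C.biUnion fun v => G.incidenceFinset v := by
    intro e he
    obtain ⟨hadj, a, ha, b, hb, rfl⟩ := mem_edgeBoundary.1 he
    exact Finset.mem_biUnion.2
      ⟨b, hC a ha b hb hadj, (G.mem_incidenceFinset b _).2 ⟨hadj, Sym2.mem_mk_right a b⟩⟩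
  calc (edgeBoundary G S).card
      ≤ ∑ v ∈ C, (G.incidenceFinset v).card :=
        (Finset.card_le_card hsub).trans Finset.card_biUnion_le
    _ = ∑ v ∈ C, G.degree v := by simp only [SimpleGraph.card_incidenceFinset_eq_degree]

end EdgeBoundary

section CanonicalPaths

variable {V : Type*} [Fintype V] {G : SimpleGraph V} (p : ∀ s t : V, G.Walk s t)

theorem phi_eq_card_filter [DecidableEq V] (e : Sym2 V) :
    phi G p e = (Finset.univ.filter fun st : V × V => e ∈ (p st.1 st.2).edges).card := by
  unfold phi
  congr!

theorem phi_le_phiMax {e : Sym2 V} (he : e ∈ G.edgeSet) : phi G p e ≤ phiMax G p := by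
  classical
  exact Finset.le_sup (f := phi G p) (SimpleGraph.mem_edgeFinset.2 he)

theorem two_mul_card_mul_card_compl_le_card_edgeBoundary_mul_phiMax [DecidableEq V] (S : Finset V) :
    2 * (S.card * Sᶜ.card) ≤ (edgeBoundary G S).card * phiMax G p := by
  have hsub : S ×ˢ Sᶜ ∪ Sᶜ ×ˢ S ⊆ (edgeBoundary G S).biUnion fun e =>
      Finset.univ.filter fun st : V × V => e ∈ (p st.1 st.2).edges := by
    rintro ⟨s, t⟩ hst
    have hcross : ∃ e ∈ edgeBoundary G S, e ∈ (p s t).edges := by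
      simp only [Finset.mem_union, Finset.mem_product, Finset.mem_compl] at hst
      obtain ⟨hs, ht⟩ | ⟨hs, ht⟩ := hst
      · exact exists_mem_edgeBoundary_mem_edges (p s t) hs ht
      · simpa only [SimpleGraph.Walk.edges_reverse, List.mem_reverse]
          using exists_mem_edgeBoundary_mem_edges (p s t).reverse ht hs
    simpa only [Finset.mem_biUnion, Finset.mem_filter, Finset.mem_univ, true_and] using hcross
  have hdisj : Disjoint (S ×ˢ Sᶜ) (Sᶜ ×ˢ S) :=
    Finset.disjoint_product.2 (Or.inl disjoint_compl_right)
  calc 2 * (S.card * Sᶜ.card)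
      = (S ×ˢ Sᶜ ∪ Sᶜ ×ˢ S).card := by
        rw [Finset.card_union_of_disjoint hdisj, Finset.card_product, Finset.card_product]
        ring
    _ ≤ (edgeBoundary G S).card * phiMax G p :=
        (Finset.card_le_card hsub).trans <| Finset.card_biUnion_le_card_mul _ _ _ fun e he =>
          (phi_eq_card_filter p e).symm.trans_le
            (phi_le_phiMax p (edgeBoundary_subset_edgeSet he))

end CanonicalPaths

section Separator

variable {V : Type*} [Fintype V] [DecidableEq V] {G : SimpleGraph V} {A B C : Finset V}

theorem card_edgeBoundary_le_mul_card_separator {d : ℕ}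
    (hdeg : ∀ v ∈ C, Nat.card (G.neighborSet v) ≤ d) (hcover : A ∪ B ∪ C = Finset.univ)
    (hsep : ∀ a ∈ A, ∀ b ∈ B, ¬ G.Adj a b) :
    (edgeBoundary G A).card ≤ d * C.card := by
  classical
  have hC : ∀ a ∈ A, ∀ b ∉ A, G.Adj a b → b ∈ C := by
    intro a ha b hbA hab
    have hb : b ∈ A ∪ B ∪ C := hcover ▸ Finset.mem_univ b
    simp only [Finset.mem_union] at hb
    exact hb.resolve_left (not_or.2 ⟨hbA, fun hbB => hsep a ha b hbB hab⟩)
  calc (edgeBoundary G A).card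
      ≤ ∑ v ∈ C, G.degree v := card_edgeBoundary_le_sum_degree hC
    _ ≤ C.card * d := Finset.sum_le_card_nsmul C _ d fun v hv => by
        simpa only [Nat.card_eq_fintype_card, SimpleGraph.card_neighborSet_eq_degree]
          using hdeg v hv
    _ = d * C.card := mul_comm _ _

theorem card_univ_le_two_mul_card_compl (hAB : Disjoint A B) (hAleB : A.card ≤ B.card) :
    Fintype.card V ≤ 2 * Aᶜ.card := by
  have hB : B.card ≤ Aᶜ.card := Finset.card_le_card hAB.symm.le_compl_right
  have hsum : A.card + Aᶜ.card = Fintype.card V := Finset.card_add_card_compl A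
  lia

theorem separator_card_ge_of_canonical_paths_general {d : ℕ} {c : ℝ}
    (hdeg : ∀ v ∈ C, Nat.card (G.neighborSet v) ≤ d) (p : ∀ s t : V, G.Walk s t)
    (hAB : Disjoint A B) (hcover : A ∪ B ∪ C = Finset.univ)
    (hA : c * Fintype.card V ≤ A.card) (hAleB : A.card ≤ B.card)
    (hsep : ∀ a ∈ A, ∀ b ∈ B, ¬ G.Adj a b) :
    c * (Fintype.card V : ℝ) ^ 2 ≤ d * phiMax G p * C.card := by
  have hcount : Fintype.card V * A.card ≤ d * phiMax G p * C.card :=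
    calc Fintype.card V * A.card
        ≤ 2 * Aᶜ.card * A.card := by gcongr; exact card_univ_le_two_mul_card_compl hAB hAleB
      _ = 2 * (A.card * Aᶜ.card) := by ring
      _ ≤ (edgeBoundary G A).card * phiMax G p :=
          two_mul_card_mul_card_compl_le_card_edgeBoundary_mul_phiMax p A
      _ ≤ d * C.card * phiMax G p := by
          gcongr; exact card_edgeBoundary_le_mul_card_separator hdeg hcover hsep
      _ = d * phiMax G p * C.card := by ring
  calc c * (Fintype.card V : ℝ) ^ 2
      = Fintype.card V * (c * Fintype.card V) := by ring
    _ ≤ Fintype.card V * A.card := by gcongr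
    _ ≤ d * phiMax G p * C.card := mod_cast hcount

end Separator

/-- For a `d`-regular simple graph on `n` vertices equipped with a
family of canonical paths, and `0 < c < 1/2`, every separator `(A, B, C)` with
separation constant `c` satisfies `2·d·φ_max·|C| ≥ c·n²`. -/
theorem separator_card_ge_of_canonical_paths {V : Type*} [Fintype V] [DecidableEq V]
    (G : SimpleGraph V) (d : ℕ) (c : ℝ)
    (hc0 : 0 < c) (hc : c < 1 / 2)
    (hreg : ∀ v : V, Nat.card (G.neighborSet v) = d)
    (p : ∀ s t : V, G.Walk s t)
    (A B C : Finset V)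
    (hAB : Disjoint A B) (hAC : Disjoint A C) (hBC : Disjoint B C)
    (hcover : A ∪ B ∪ C = Finset.univ)
    (hA : c * Fintype.card V ≤ A.card) (hAleB : A.card ≤ B.card)
    (hsep : ∀ a ∈ A, ∀ b ∈ B, ¬ G.Adj a b) :
    c * (Fintype.card V : ℝ) ^ 2 ≤ 2 * d * phiMax G p * C.card := by
  have hbound := separator_card_ge_of_canonical_paths_general (fun v _ => (hreg v).le) p
    hAB hcover hA hAleB hsep
  linarith [show (0 : ℝ) ≤ d * phiMax G p * C.card by positivity]
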